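/- Let n be a natural number and let S' ⊆ ℝ be a set with 0 ∈ S' such that for every A ∈ ℝ the intersection S' ∩ [A, ∞) is finite. Let 𝒮 be a nonempty set of real polynomials such that every F ∈ 𝒮 has degree < n and every coefficient of every F ∈ 𝒮 lies in S'. Then there exist a polynomial G ∈ 𝒮 and a real number ε₀ > 0 such that for every F ∈ 𝒮 with F ≠ G and every ε with 0 < ε ≤ ε₀ one has F(ε) < G(ε). -/

import Mathlib

/-!
Let `G` be the element of `𝒮` whose coefficient sequence is lexicographically largest; it exists
because the set of admissible coefficients is well-ordered by `>`. If `F ≠ G` first differs from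
`G` in degree `i`, then `F.coeff i < G.coeff i - δ` for a `δ > 0` depending only on `G`, since every
element of a set well-ordered by `>` has a gap below it. Admissible coefficients are also bounded
above, by `M` say, so for `ε ≤ 1` the higher coefficients of `F - G` contribute at most
`ε ^ (i + 1) * C` with `C = ∑ j < n, (M - G.coeff j)`. Hence `(F - G)(ε) < ε ^ i * (-δ + ε * C)`,
which is negative for all `F` at once as soon as `C * ε < δ`.
-/

open Polynomial

section WellOrderedByGT

variable {α : Type*} [LinearOrder α] {S : Set α}

lemma wellFoundedOn_gt_of_finite_inter_Ici (hS : ∀ a, (S ∩ Set.Ici a).Finite) :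
    S.WellFoundedOn (· > ·) := by
  rw [Set.WellFoundedOn, WellFounded.wellFounded_iff_has_min]
  rintro T ⟨a, ha⟩
  have hfin : {t ∈ T | a ≤ t}.Finite :=
    ((hS a).preimage Subtype.val_injective.injOn).subset fun t ht ↦ ⟨t.2, ht.2⟩
  obtain ⟨m, ⟨hmT, ham⟩, hmax⟩ := Set.exists_max_image _ id hfin ⟨a, ha, le_rfl⟩
  exact ⟨m, hmT, fun t ht hmt ↦ hmt.not_ge (hmax t ⟨ht, ham.trans (le_of_lt hmt)⟩)⟩

lemma exists_isGreatest_of_wellFoundedOn_gt (hS : S.WellFoundedOn (· > ·)) (hne : S.Nonempty) :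
    ∃ m, IsGreatest S m := by
  obtain ⟨m, hm⟩ := hS.exists_maximal hne
  exact ⟨m, hm.prop, fun s hs ↦ le_of_not_gt fun hms ↦ hm.not_gt hs hms⟩

lemma bddAbove_of_wellFoundedOn_gt [Nonempty α] (hS : S.WellFoundedOn (· > ·)) : BddAbove S := by
  rcases S.eq_empty_or_nonempty with rfl | hne
  · exact bddAbove_empty
  · obtain ⟨m, hm⟩ := exists_isGreatest_of_wellFoundedOn_gt hS hne
    exact hm.bddAbove

lemma exists_lt_forall_lt_imp_le [NoMinOrder α] (hS : S.WellFoundedOn (· > ·)) (a : α) :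
    ∃ m < a, ∀ s ∈ S, s < a → s ≤ m := by
  rcases (S ∩ Set.Iio a).eq_empty_or_nonempty with hempty | hne
  · obtain ⟨m, hm⟩ := exists_lt a
    exact ⟨m, hm, fun s hs hsa ↦ (Set.eq_empty_iff_forall_notMem.1 hempty s ⟨hs, hsa⟩).elim⟩
  · obtain ⟨m, hm, hmax⟩ :=
      exists_isGreatest_of_wellFoundedOn_gt (hS.subset Set.inter_subset_left) hne
    exact ⟨m, hm.2, fun s hs hsa ↦ hmax ⟨hs, hsa⟩⟩

end WellOrderedByGT

lemma exists_pos_forall_lt_imp_add_lt {K ι : Type*} [Field K] [LinearOrder K]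
    [IsStrictOrderedRing K] [Finite ι] {S : Set K} (hS : S.WellFoundedOn (· > ·)) (a : ι → K) :
    ∃ δ > 0, ∀ i, ∀ s ∈ S, s < a i → s + δ < a i := by
  choose m hma hm using fun i ↦ exists_lt_forall_lt_imp_le hS (a i)
  obtain ⟨δ, hδ, hmδ⟩ := Pi.exists_forall_pos_add_lt hma
  exact ⟨δ, hδ, fun i s hs hsa ↦ (add_le_add_left (hm i s hs hsa) δ).trans_lt (hmδ i)⟩

lemma exists_lt_coeff_lt_of_toLex_coeff_lt {R : Type*} [Semiring R] [Preorder R] {n : ℕ}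
    {P Q : R[X]} (hP : P.degree < n) (hQ : Q.degree < n) (hPQ : toLex P.coeff < toLex Q.coeff) :
    ∃ i < n, (∀ j < i, P.coeff j = Q.coeff j) ∧ P.coeff i < Q.coeff i := by
  obtain ⟨i, hagree, hlt⟩ := hPQ
  refine ⟨i, ?_, hagree, hlt⟩
  by_contra! hni
  have hcoeff_zero {F : R[X]} (hF : F.degree < n) : F.coeff i = 0 :=
    coeff_eq_zero_of_degree_lt (hF.trans_le (by exact_mod_cast hni))
  exact hlt.ne ((hcoeff_zero hP).trans (hcoeff_zero hQ).symm)

lemma exists_forall_toLex_coeff_le {R : Type*} [Semiring R] [LinearOrder R] {n : ℕ} {S : Set R}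
    (hS : S.WellFoundedOn (· > ·)) {𝒮 : Set R[X]} (hne : 𝒮.Nonempty)
    (hdeg : ∀ F ∈ 𝒮, F.degree < n) (hcoeff : ∀ F ∈ 𝒮, ∀ i < n, F.coeff i ∈ S) :
    ∃ G ∈ 𝒮, ∀ F ∈ 𝒮, toLex F.coeff ≤ toLex G.coeff := by
  let coeffs : 𝒮 → Fin n → S := fun F i ↦ ⟨F.1.coeff i, hcoeff F F.2 i i.2⟩
  have hwf : WellFounded (InvImage (Pi.Lex (· < ·) (· > ·)) coeffs) :=
    InvImage.wf _ (Pi.Lex.wellFounded _ fun _ ↦ hS)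
  obtain ⟨G, -, hG⟩ := hwf.has_min Set.univ ⟨⟨_, hne.some_mem⟩, trivial⟩
  refine ⟨G, G.2, fun F hF ↦ le_of_not_gt fun hGF ↦ ?_⟩
  obtain ⟨i, hi, hagree, hlt⟩ :=
    exists_lt_coeff_lt_of_toLex_coeff_lt (hdeg G G.2) (hdeg F hF) hGF
  exact hG ⟨F, hF⟩ trivial ⟨⟨i, hi⟩, fun j hj ↦ Subtype.ext (hagree j hj).symm, hlt⟩

lemma eval_le_pow_mul_coeff_add {R : Type*} [CommRing R] [LinearOrder R] [IsStrictOrderedRing R]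
    {n i : ℕ} {P : R[X]} {b : ℕ → R} {ε : R} (hdeg : P.degree < n) (hi : i < n)
    (hlow : ∀ j < i, P.coeff j = 0) (hb : ∀ j < n, 0 ≤ b j) (hPb : ∀ j < n, P.coeff j ≤ b j)
    (hε₀ : 0 ≤ ε) (hε₁ : ε ≤ 1) :
    P.eval ε ≤ ε ^ i * (P.coeff i + ε * ∑ j ∈ Finset.range n, b j) := by
  have hterm : ∀ j ∈ Finset.range n,
      P.coeff j * ε ^ j ≤ (if j = i then P.coeff i * ε ^ i else 0) + b j * ε ^ (i + 1) := by
    intro j hj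
    have hjn := Finset.mem_range.1 hj
    have htail : 0 ≤ b j * ε ^ (i + 1) := mul_nonneg (hb j hjn) (pow_nonneg hε₀ _)
    rcases lt_trichotomy j i with hji | rfl | hij
    · simpa [hlow j hji, hji.ne] using htail
    · simpa using htail
    · calc P.coeff j * ε ^ j ≤ b j * ε ^ j := by gcongr; exact hPb j hjn
        _ ≤ b j * ε ^ (i + 1) :=
          mul_le_mul_of_nonneg_left (pow_le_pow_of_le_one hε₀ hε₁ hij) (hb j hjn)
        _ = _ := by rw [if_neg hij.ne', zero_add]
  have hnat : P.natDegree < n := by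
    rcases eq_or_ne P 0 with rfl | hP
    · simpa using i.zero_le.trans_lt hi
    · exact (natDegree_lt_iff_degree_lt hP).2 hdeg
  calc P.eval ε = ∑ j ∈ Finset.range n, P.coeff j * ε ^ j := eval_eq_sum_range' hnat ε
    _ ≤ ∑ j ∈ Finset.range n,
          ((if j = i then P.coeff i * ε ^ i else 0) + b j * ε ^ (i + 1)) := Finset.sum_le_sum hterm
    _ = P.coeff i * ε ^ i + (∑ j ∈ Finset.range n, b j) * ε ^ (i + 1) := by
      rw [Finset.sum_add_distrib, Finset.sum_ite_eq', if_pos (Finset.mem_range.2 hi),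
        Finset.sum_mul]
    _ = ε ^ i * (P.coeff i + ε * ∑ j ∈ Finset.range n, b j) := by ring

lemma eval_lt_eval_of_coeff_add_lt {R : Type*} [CommRing R] [LinearOrder R]
    [IsStrictOrderedRing R] {n i : ℕ} {F G : R[X]} {M δ ε : R} (hF : F.degree < n)
    (hG : G.degree < n) (hi : i < n) (hagree : ∀ j < i, F.coeff j = G.coeff j)
    (hgap : F.coeff i + δ < G.coeff i) (hFM : ∀ j < n, F.coeff j ≤ M)
    (hGM : ∀ j < n, G.coeff j ≤ M) (hε₀ : 0 < ε) (hε₁ : ε ≤ 1)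
    (hsmall : ε * ∑ j ∈ Finset.range n, (M - G.coeff j) ≤ δ) :
    F.eval ε < G.eval ε := by
  have hbound := eval_le_pow_mul_coeff_add (P := F - G) (b := fun j ↦ M - G.coeff j)
    ((degree_sub_le F G).trans_lt (max_lt hF hG)) hi
    (fun j hj ↦ by rw [coeff_sub, hagree j hj, sub_self])
    (fun j hj ↦ sub_nonneg.2 (hGM j hj))
    (fun j hj ↦ by rw [coeff_sub]; exact sub_le_sub_right (hFM j hj) _) hε₀.le hε₁
  have hneg : (F - G).coeff i + ε * ∑ j ∈ Finset.range n, (M - G.coeff j) < 0 := by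
    rw [coeff_sub]
    linarith
  rw [← sub_neg, ← eval_sub]
  exact hbound.trans_lt (mul_neg_of_pos_of_neg (pow_pos hε₀ i) hneg)

theorem stmt_1_general {K : Type*} [Field K] [LinearOrder K] [IsStrictOrderedRing K] {n : ℕ}
    {S : Set K} (hS : S.WellFoundedOn (· > ·)) {𝒮 : Set K[X]} (hne : 𝒮.Nonempty)
    (hdeg : ∀ F ∈ 𝒮, F.degree < n) (hcoeff : ∀ F ∈ 𝒮, ∀ i < n, F.coeff i ∈ S) :
    ∃ G ∈ 𝒮, ∃ ε₀ : K, 0 < ε₀ ∧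
      ∀ F ∈ 𝒮, F ≠ G → ∀ ε : K, 0 < ε → ε ≤ ε₀ → F.eval ε < G.eval ε := by
  obtain ⟨G, hG, hGmax⟩ := exists_forall_toLex_coeff_le hS hne hdeg hcoeff
  obtain ⟨M, hM⟩ := bddAbove_of_wellFoundedOn_gt hS
  have hcoeff_le : ∀ F ∈ 𝒮, ∀ j < n, F.coeff j ≤ M := fun F hF j hj ↦ hM (hcoeff F hF j hj)
  have hsum_nonneg : 0 ≤ ∑ j ∈ Finset.range n, (M - G.coeff j) :=
    Finset.sum_nonneg fun j hj ↦ sub_nonneg.2 (hcoeff_le G hG j (Finset.mem_range.1 hj))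
  obtain ⟨δ, hδ, hgap⟩ := exists_pos_forall_lt_imp_add_lt hS fun i : Fin n ↦ G.coeff i
  obtain ⟨ε₁, hε₁, hsmall⟩ := exists_pos_mul_lt hδ (∑ j ∈ Finset.range n, (M - G.coeff j))
  refine ⟨G, hG, min 1 ε₁, lt_min one_pos hε₁, fun F hF hFG ε hε hle ↦ ?_⟩
  obtain ⟨hε_le_one, hε_le⟩ := le_min_iff.1 hle
  have hlex : toLex F.coeff < toLex G.coeff :=
    (hGmax F hF).lt_of_ne fun h ↦ hFG (coeff_injective (toLex.injective h))
  obtain ⟨i, hi, hagree, hlt⟩ := exists_lt_coeff_lt_of_toLex_coeff_lt (hdeg F hF) (hdeg G hG) hlex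
  refine eval_lt_eval_of_coeff_add_lt (hdeg F hF) (hdeg G hG) hi hagree
    (hgap ⟨i, hi⟩ _ (hcoeff F hF i hi) hlt) (hcoeff_le F hF) (hcoeff_le G hG) hε hε_le_one ?_
  rw [mul_comm]
  exact (mul_le_mul_of_nonneg_left hε_le hsum_nonneg).trans hsmall.le

theorem stmt_1 (n : ℕ) (S' : Set ℝ) (h0 : (0 : ℝ) ∈ S')
    (hfin : ∀ A : ℝ, (S' ∩ Set.Ici A).Finite)
    (𝒮 : Set (Polynomial ℝ)) (hne : 𝒮.Nonempty)
    (hdeg : ∀ F ∈ 𝒮, F.degree < (n : WithBot ℕ))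
    (hcoeff : ∀ F ∈ 𝒮, ∀ i : ℕ, F.coeff i ∈ S') :
    ∃ G ∈ 𝒮, ∃ ε₀ : ℝ, 0 < ε₀ ∧
      ∀ F ∈ 𝒮, F ≠ G → ∀ ε : ℝ, 0 < ε → ε ≤ ε₀ → F.eval ε < G.eval ε :=
  stmt_1_general (wellFoundedOn_gt_of_finite_inter_Ici hfin) hne hdeg fun F hF i _ ↦ hcoeff F hF i
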